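/- Let p(z) = \sum_{i=0}^n a_i z^i be a polynomial over \mathbb{C} of degree n with a_n \neq 0 and a_0 \neq 0. Then the multiset of complex roots of p (counted with multiplicity) is invariant under the inversion map z \mapsto 1/\overline{z} if and only if a_0 \cdot \overline{a_j} = \overline{a_n} \cdot a_{n-j} for all 0 \le j \le n. -/

import Mathlib

open Polynomial

lemma reverse_prod_roots (s : Multiset ℂ) (hs : (0:ℂ) ∉ s) :
    (s.map (fun a => X - C a)).prod.reverse.roots = s.map (fun a => a⁻¹) := by
  induction s using Multiset.induction_on with
  | empty =>
    have : (1 : ℂ[X]).reverse = 1 := by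
      rw [← C_1, reverse_C]
    simp [this]
  | cons a s ih =>
    rw [Multiset.mem_cons, not_or] at hs
    have ha : a ≠ 0 := fun h => hs.1 h.symm
    rw [Multiset.map_cons, Multiset.prod_cons, reverse_mul_of_domain, roots_mul, ih hs.2,
      Multiset.map_cons]
    · have h1 : (X - C a : ℂ[X]).reverse = C (-a) * (X - C a⁻¹) := by
        have h2 : (X - C a : ℂ[X]).reverse = 1 - C a * X := by
          rw [reverse, natDegree_X_sub_C, reflect_sub, reflect_C]
          have := reflect_monomial (R := ℂ) 1 1
          rw [pow_one] at this
          rw [this]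
          simp [revAt_le]
        rw [h2, mul_sub, ← C_mul]
        have : -a * a⁻¹ = -1 := by field_simp
        rw [this]
        simp
        ring
      rw [h1, roots_C_mul _ (neg_ne_zero.mpr ha), roots_X_sub_C, Multiset.singleton_add]
    · refine mul_ne_zero ?_ ?_
      · simpa using X_sub_C_ne_zero a
      · rw [Ne, reverse_eq_zero]
        exact (monic_multiset_prod_of_monic _ _ fun a _ => monic_X_sub_C a).ne_zero

lemma reverse_roots (q : ℂ[X]) (h0 : q.coeff 0 ≠ 0) :
    q.reverse.roots = q.roots.map (fun a => a⁻¹) := by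
  have hq : q ≠ 0 := by rintro rfl; simp at h0
  have h : (0:ℂ) ∉ q.roots := by
    rw [mem_roots hq, IsRoot, ← coeff_zero_eq_eval_zero]; exact h0
  rw [← reverse_prod_roots _ h]
  conv_lhs => rw [(IsAlgClosed.splits q).eq_prod_roots]
  rw [reverse_mul_of_domain, reverse_C, roots_C_mul _ (leadingCoeff_ne_zero.mpr hq)]

/-- A degree-`n` polynomial over `ℂ` with nonzero constant and leading coefficients has its
multiset of roots invariant under the inversion `z ↦ 1/conj z` iff
`a₀ * conj aⱼ = conj aₙ * a_{n-j}` for all `0 ≤ j ≤ n`. -/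
theorem stmt_0 (n : ℕ) (p : Polynomial ℂ) (hdeg : p.natDegree = n)
    (han : p.coeff n ≠ 0) (ha0 : p.coeff 0 ≠ 0) :
    p.roots.map (fun z => ((starRingEnd ℂ) z)⁻¹) = p.roots ↔
      ∀ j ≤ n, p.coeff 0 * (starRingEnd ℂ) (p.coeff j) =
        (starRingEnd ℂ) (p.coeff n) * p.coeff (n - j) := by
  have ha0' : (starRingEnd ℂ) (p.coeff 0) ≠ 0 := by simpa using ha0
  obtain ⟨q, hq⟩ : ∃ q, q = (p.map (starRingEnd ℂ)).reverse := ⟨_, rfl⟩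
  have hr : p.roots.map (fun z => ((starRingEnd ℂ) z)⁻¹) = q.roots := by
    rw [hq, reverse_roots _ (by simpa using ha0), (IsAlgClosed.splits p).roots_map,
      Multiset.map_map]
    rfl
  have hc : ∀ j ≤ n, q.coeff j = (starRingEnd ℂ) (p.coeff (n - j)) := by
    intro j hj
    rw [hq, coeff_reverse, natDegree_map, hdeg, revAt_le hj, coeff_map]
  have hqd : q.natDegree ≤ n := by
    rw [hq]; exact (reverse_natDegree_le _).trans (by rw [natDegree_map, hdeg])
  have hqn : q.coeff n = (starRingEnd ℂ) (p.coeff 0) := by rw [hc n le_rfl]; simp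
  have hqd' : q.natDegree = n := natDegree_eq_of_le_of_coeff_ne_zero hqd (by rwa [hqn])
  rw [hr]
  have key : q.roots = p.roots ↔ C ((starRingEnd ℂ) (p.coeff 0)) * p = C (p.coeff n) * q := by
    constructor
    · intro h
      have h1 := (IsAlgClosed.splits p).eq_prod_roots
      have h2 := (IsAlgClosed.splits q).eq_prod_roots
      rw [leadingCoeff, hdeg] at h1
      rw [leadingCoeff, hqd', hqn, h] at h2
      generalize (Multiset.map (fun a => X - C a) p.roots).prod = P at h1 h2
      generalize p.coeff n = a at *
      generalize p.coeff 0 = b at *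
      rw [h1, h2]; ring
    · intro h
      rw [← roots_C_mul q han, ← h, roots_C_mul p ha0']
  rw [key]
  constructor
  · intro h j hj
    have := congrArg (fun r => (starRingEnd ℂ) (r.coeff j)) h
    simpa [hc j hj] using this
  · intro h
    ext j
    by_cases hj : j ≤ n
    · have := congrArg (starRingEnd ℂ) (h j hj)
      simpa [hc j hj] using this
    · have e1 : p.coeff j = 0 := coeff_eq_zero_of_natDegree_lt (by omega)
      have e2 : q.coeff j = 0 := coeff_eq_zero_of_natDegree_lt (by omega)
      rw [coeff_C_mul, coeff_C_mul, e1, e2, mul_zero, mul_zero]
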